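/- arXiv:1810.09287 — 3 statements merged into one kernel-verified Lean document; each statement's English description precedes it below -/
import Mathlib

section
/- Let C be a finite quotienting Boolean algebra, A an alphabet, and let h be the J-depth of the finite monoid A*/~_C. Let α: A* → M and β: A* → N be C-compatible morphisms and S ⊆ N a good subset. Then for every (s,T) ∈ M × 2^N, the following are equivalent: (1) (s,T) is the root label of some (α,β,S)-tree; (2) (s,T) is the root label of some (α,β,S)-tree whose operational height is at most h. -/
open scoped Pointwise

/-! Infrastructure: classes of languages, quotienting Boolean algebras, the canonical
equivalence `∼_C` on `A*`, the quotient monoid `A*/∼_C`, `C`-compatible morphisms, good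
subsets and `(α,β,S)`-trees (represented through the inductive predicate describing
the possible root labels), and the `J`-depth of a finite monoid. -/

/-- A class of languages: to every alphabet it associates a set of languages. -/
abbrev LangClass : Type 1 := ∀ A : Type, Set (Language A)

/-- A morphism `α : A* → M` recognizes `L` when `L = α⁻¹(F)` for some `F ⊆ M`. -/
def Recognizes {A M : Type} [Monoid M] (α : FreeMonoid A →* M) (L : Language A) : Prop :=
  ∃ F : Set M, L = {w : List A | α (FreeMonoid.ofList w) ∈ F}

/-- `C` is a quotienting Boolean algebra: each `C(A)` contains `∅` and `A*`, is
closed under union, intersection and complement, and under word quotients. -/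
def IsQBA (C : LangClass) : Prop :=
  ∀ (A : Type) [Fintype A],
    (⊥ : Language A) ∈ C A ∧ (⊤ : Language A) ∈ C A ∧
    (∀ K L : Language A, K ∈ C A → L ∈ C A → K ⊔ L ∈ C A ∧ K ⊓ L ∈ C A) ∧
    (∀ L ∈ C A, Lᶜ ∈ C A) ∧
    (∀ L ∈ C A, ∀ u : List A,
      {w : List A | u ++ w ∈ L} ∈ C A ∧ {w : List A | w ++ u ∈ L} ∈ C A)

/-- `C` is a finite class: `C(A)` is a finite set for every alphabet. -/
def IsFiniteClass (C : LangClass) : Prop :=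
  ∀ (A : Type) [Fintype A], (C A).Finite

/-- The canonical equivalence `∼_C` on `A*` associated with (the value at `A` of) a
class of languages: `u ∼_C v` iff `u` and `v` belong to the same languages of `C(A)`. -/
def cRel {A : Type} (𝒞 : Set (Language A)) (u v : FreeMonoid A) : Prop :=
  ∀ L ∈ 𝒞, (FreeMonoid.toList u ∈ L ↔ FreeMonoid.toList v ∈ L)

/-- The congruence on `A*` given by `∼_C` (the fact that `∼_C` is a congruence for
concatenation, which holds since `C` is a quotienting Boolean algebra, is taken as the
hypothesis `hcong`). Its quotient `(cCon 𝒞 hcong).Quotient` is the monoid `A*/∼_C`,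
and `(cCon 𝒞 hcong).mk'` is the morphism `w ↦ [w]_C`. -/
def cCon {A : Type} (𝒞 : Set (Language A))
    (hcong : ∀ u v u' v' : FreeMonoid A,
      cRel 𝒞 u u' → cRel 𝒞 v v' → cRel 𝒞 (u * v) (u' * v')) :
    Con (FreeMonoid A) where
  r := cRel 𝒞
  iseqv := ⟨fun _ _ _ => Iff.rfl, fun h L hL => (h L hL).symm,
    fun h h' L hL => (h L hL).trans (h' L hL)⟩
  mul' := fun h h' => hcong _ _ _ _ h h'

/-- A morphism `α : A* → M` is `C`-compatible when there is a monoid morphism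
`s ↦ [s]_C` from `M` to `A*/∼_C` such that `[α(w)]_C = [w]_C` for every word `w`. -/
def CCompatible {A : Type} (𝒞 : Set (Language A))
    (hcong : ∀ u v u' v' : FreeMonoid A,
      cRel 𝒞 u u' → cRel 𝒞 v v' → cRel 𝒞 (u * v) (u' * v'))
    {M : Type} [Monoid M] (α : FreeMonoid A →* M) : Prop :=
  ∃ cl : M →* (cCon 𝒞 hcong).Quotient,
    ∀ w : FreeMonoid A, cl (α w) = (cCon 𝒞 hcong).mk' w

/-- `S ⊆ N` is good (for `β`) when it contains `β(A*)` and is closed under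
multiplication. -/
def GoodSubset {A N : Type} [Monoid N] (β : FreeMonoid A →* N) (S : Set N) : Prop :=
  (∀ w : FreeMonoid A, β w ∈ S) ∧ ∀ s ∈ S, ∀ t ∈ S, s * t ∈ S

/-- `TreeRoot α β clM clN S s T` holds exactly when `(s,T) ∈ M × 2^N` is the root
label of some `(α,β,S)`-tree; `clM, clN` are the morphisms `s ↦ [s]_C` coming with the
`C`-compatibility of `α` and `β`. The three constructors correspond to the three kinds
of nodes (leaves, binary nodes and `S`-operation nodes). -/
inductive TreeRoot {A M N Q : Type} [Monoid M] [Monoid N] [Monoid Q]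
    (α : FreeMonoid A →* M) (β : FreeMonoid A →* N)
    (clM : M →* Q) (clN : N →* Q) (S : Set N) : M → Set N → Prop
  | leaf (w : FreeMonoid A) : TreeRoot α β clM clN S (α w) {β w}
  | binary {s₁ : M} {T₁ : Set N} {s₂ : M} {T₂ : Set N} (T : Set N) :
      TreeRoot α β clM clN S s₁ T₁ → TreeRoot α β clM clN S s₂ T₂ →
      T ⊆ T₁ * T₂ → TreeRoot α β clM clN S (s₁ * s₂) T
  | op {e : M} {E : Set N} (T : Set N) :
      TreeRoot α β clM clN S e E → e * e = e → E * E = E →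
      T ⊆ E * {t | t ∈ S ∧ clM e = clN t} * E →
      TreeRoot α β clM clN S e T

/-- `TreeRootH α β clM clN S h s T` holds exactly when `(s,T)` is the root label of
some `(α,β,S)`-tree of operational height at most `h` (the index is incremented at
`S`-operation nodes). -/
inductive TreeRootH {A M N Q : Type} [Monoid M] [Monoid N] [Monoid Q]
    (α : FreeMonoid A →* M) (β : FreeMonoid A →* N)
    (clM : M →* Q) (clN : N →* Q) (S : Set N) : ℕ → M → Set N → Prop
  | leaf (h : ℕ) (w : FreeMonoid A) : TreeRootH α β clM clN S h (α w) {β w}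
  | binary {h : ℕ} {s₁ : M} {T₁ : Set N} {s₂ : M} {T₂ : Set N} (T : Set N) :
      TreeRootH α β clM clN S h s₁ T₁ → TreeRootH α β clM clN S h s₂ T₂ →
      T ⊆ T₁ * T₂ → TreeRootH α β clM clN S h (s₁ * s₂) T
  | op {h : ℕ} {e : M} {E : Set N} (T : Set N) :
      TreeRootH α β clM clN S h e E → e * e = e → E * E = E →
      T ⊆ E * {t | t ∈ S ∧ clM e = clN t} * E →
      TreeRootH α β clM clN S (h + 1) e T

/-- `JDepthIs Q h` : the `J`-depth of the monoid `Q` is `h`, i.e. `h` is the greatest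
length of a sequence of pairwise distinct elements `s₁, …, s_h` of `Q` such that each
`s_{i+1}` is of the form `x · s_i · y`. -/
def JDepthIs (Q : Type) [Monoid Q] (h : ℕ) : Prop :=
  IsGreatest {n : ℕ | ∃ l : List Q, l.length = n ∧ l.Nodup ∧
    l.Chain' (fun a b => ∃ x y : Q, b = x * a * y)} h

/-- `b` is below `a` in the `J`-preorder. -/
def JBelow {Q : Type} [Monoid Q] (a b : Q) : Prop := ∃ x y : Q, b = x * a * y

theorem JBelow.rfl' {Q : Type} [Monoid Q] (a : Q) : JBelow a a := ⟨1, 1, by simp⟩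

theorem JBelow.trans' {Q : Type} [Monoid Q] {a b c : Q} (h1 : JBelow a b) (h2 : JBelow b c) :
    JBelow a c := by
  obtain ⟨x, y, rfl⟩ := h1
  obtain ⟨z, t, rfl⟩ := h2
  exact ⟨z * x, y * t, by simp only [mul_assoc]⟩

/-- Strict version. -/
def JLt {Q : Type} [Monoid Q] (a b : Q) : Prop := JBelow a b ∧ ¬ JBelow b a

theorem exists_depth {Q : Type} [Monoid Q] {h : ℕ} (hJ : JDepthIs Q h) :
    ∃ D : Q → ℕ, (∀ q, D q + 1 ≤ h) ∧ (∀ p q, JLt p q → D p + 1 ≤ D q) ∧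
      (∀ p q, JBelow p q → JBelow q p → D p = D q) := by
  classical
  let P : Q → Set ℕ := fun q => {n | ∃ l : List Q, l.length = n ∧ l.Pairwise JLt ∧
    ∀ a ∈ l, JLt a q}
  have hb : ∀ q, ∀ n ∈ P q, n + 1 ≤ h := by
    rintro q n ⟨l, rfl, hl, hq⟩
    apply hJ.2
    have hp : (l ++ [q]).Pairwise JLt := by
      rw [List.pairwise_append]
      refine ⟨hl, by simp, ?_⟩
      intro a ha b hb
      simp only [List.mem_singleton] at hb
      subst hb
      exact hq a ha
    refine ⟨l ++ [q], by simp, ?_, ?_⟩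
    · refine List.Pairwise.imp ?_ hp
      rintro a b hab rfl
      exact hab.2 hab.1
    · exact (hp.imp (fun hab => hab.1)).isChain
  have hbdd : ∀ q, BddAbove (P q) := fun q => ⟨h, fun n hn => by have := hb q n hn; omega⟩
  have hne : ∀ q, (P q).Nonempty := fun q => ⟨0, [], by simp⟩
  have hmem : ∀ q, sSup (P q) ∈ P q := fun q => Nat.sSup_mem (hne q) (hbdd q)
  refine ⟨fun q => sSup (P q), fun q => hb q _ (hmem q), ?_, ?_⟩
  · intro p q hpq
    apply le_csSup (hbdd q)
    obtain ⟨l, hlen, hl, hp⟩ := hmem p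
    refine ⟨l ++ [p], by simp [hlen], ?_, ?_⟩
    · rw [List.pairwise_append]
      refine ⟨hl, by simp, ?_⟩
      intro a ha b hb
      simp only [List.mem_singleton] at hb
      subst hb
      exact hp a ha
    · intro a ha
      rw [List.mem_append, List.mem_singleton] at ha
      rcases ha with ha | rfl
      · exact ⟨(hp a ha).1.trans' hpq.1, fun hc => (hp a ha).2 (hpq.1.trans' hc)⟩
      · exact hpq
  · intro p q h1 h2
    have : P p = P q := by
      ext n
      constructor
      · rintro ⟨l, hlen, hl, hp⟩
        exact ⟨l, hlen, hl, fun a ha =>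
          ⟨(hp a ha).1.trans' h1, fun hc => (hp a ha).2 (h1.trans' hc)⟩⟩
      · rintro ⟨l, hlen, hl, hp⟩
        exact ⟨l, hlen, hl, fun a ha =>
          ⟨(hp a ha).1.trans' h2, fun hc => (hp a ha).2 (h2.trans' hc)⟩⟩
    simp only [this]

/-- Local Dedekind finiteness. -/
theorem local_idem {Q : Type} [Monoid Q] [Finite Q] {f u p v : Q} (hf : f * f = f)
    (hp : p * p = p) (hfp : f * p = p) (hpf : p * f = p)
    (hfv : f * v = v) (h : u * p * v = f) : p = f := by
  let K := {z : Q // f * z = z}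
  let φ : K → K := fun z => ⟨v * z.1, by rw [← mul_assoc, hfv]⟩
  have hinj : Function.Injective φ := by
    intro z z' hz
    have hz' : v * z.1 = v * z'.1 := congrArg Subtype.val hz
    apply Subtype.ext
    calc z.1 = f * z.1 := z.2.symm
      _ = u * p * (v * z.1) := by rw [← mul_assoc, h]
      _ = u * p * (v * z'.1) := by rw [hz']
      _ = f * z'.1 := by rw [← mul_assoc, h]
      _ = z'.1 := z'.2
  obtain ⟨w, hw⟩ := Finite.surjective_of_injective hinj ⟨f, hf⟩
  have hw' : v * w.1 = f := congrArg Subtype.val hw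
  have h1 : u * p = w.1 := by
    calc u * p = u * p * f := by rw [mul_assoc, hpf]
      _ = u * p * v * w.1 := by rw [mul_assoc (u * p), hw']
      _ = w.1 := by rw [h, w.2]
  have h2 : v * (u * p) = f := by rw [h1, hw']
  calc p = f * p := hfp.symm
    _ = v * (u * p) * p := by rw [h2]
    _ = v * (u * (p * p)) := by simp only [mul_assoc]
    _ = f := by rw [hp, h2]

theorem key_idem {Q : Type} [Monoid Q] [Finite Q] {e f x y : Q} (he : e * e = e)
    (hf : f * f = f) (hx : e = x * f * y) (hJ : JBelow e f) : f * y * e * x * f = f := by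
  obtain ⟨a, b, hab⟩ := hJ
  have he' : ∀ z, e * (e * z) = e * z := fun z => by rw [← mul_assoc, he]
  have hf' : ∀ z, f * (f * z) = f * z := fun z => by rw [← mul_assoc, hf]
  have hx' : ∀ z, x * (f * (y * z)) = e * z := fun z => by rw [hx]; simp only [mul_assoc]
  apply local_idem (u := f * a * x) (v := f * y * b * f) hf
  · simp only [mul_assoc, hf', hx', he']
  · simp only [mul_assoc, hf']
  · simp only [mul_assoc, hf]
  · simp only [mul_assoc, hf']
  · simp only [mul_assoc, hf', hx', he']
    rw [← mul_assoc e b f, ← mul_assoc a, ← mul_assoc a, ← hab, hf, hf]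

section Trees

variable {A M N Q : Type} [Monoid M] [Monoid N] [Monoid Q]
    {α : FreeMonoid A →* M} {β : FreeMonoid A →* N}
    {clM : M →* Q} {clN : N →* Q} {S : Set N}

theorem TreeRootH.succ {k : ℕ} {s : M} {T : Set N}
    (h : TreeRootH α β clM clN S k s T) : TreeRootH α β clM clN S (k + 1) s T := by
  induction h with
  | leaf h w => exact .leaf _ w
  | binary T _ _ hT ih1 ih2 => exact .binary T ih1 ih2 hT
  | op T _ he hE hT ih => exact .op T ih he hE hT

theorem TreeRootH.mono {k k' : ℕ} (hk : k ≤ k') {s : M} {T : Set N}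
    (h : TreeRootH α β clM clN S k s T) : TreeRootH α β clM clN S k' s T := by
  induction hk with
  | refl => exact h
  | step _ ih => exact ih.succ

theorem TreeRootH.sound (hcl : ∀ w, clM (α w) = clN (β w)) (hS : GoodSubset β S)
    {k : ℕ} {s : M} {T : Set N}
    (h : TreeRootH α β clM clN S k s T) : ∀ t ∈ T, t ∈ S ∧ clN t = clM s := by
  induction h with
  | leaf h w =>
    rintro t rfl
    exact ⟨hS.1 w, (hcl w).symm⟩
  | binary T _ _ hT ih1 ih2 =>
    intro t ht
    obtain ⟨a, ha, b, hb, rfl⟩ := hT ht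
    exact ⟨hS.2 _ (ih1 a ha).1 _ (ih2 b hb).1, by
      simp only [map_mul, (ih1 a ha).2, (ih2 b hb).2]⟩
  | op T _ he hE hT ih =>
    intro t ht
    obtain ⟨_, ⟨a, ha, b, hb, rfl⟩, c, hc, rfl⟩ := hT ht
    refine ⟨hS.2 _ (hS.2 _ (ih a ha).1 _ hb.1) _ (ih c hc).1, ?_⟩
    simp only [map_mul, (ih a ha).2, (ih c hc).2, ← hb.2]
    rw [← map_mul, ← map_mul, he, he]

theorem tree_main [Finite Q] (hcl : ∀ w, clM (α w) = clN (β w)) (hS : GoodSubset β S)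
    (D : Q → ℕ) (D1 : ∀ p q, JLt p q → D p + 1 ≤ D q)
    (D2 : ∀ p q, JBelow p q → JBelow q p → D p = D q)
    {k : ℕ} {s : M} {T : Set N} (h : TreeRootH α β clM clN S k s T) :
    ∀ q : Q, JBelow (clM s) q →
      (∃ (x f y : M) (X F Y : Set N), s = x * f * y ∧
        T ⊆ X * (F * {t | t ∈ S ∧ clM f = clN t} * F) * Y ∧
        TreeRootH α β clM clN S (D q + 1) x X ∧ TreeRootH α β clM clN S (D q + 1) y Y ∧
        TreeRootH α β clM clN S (D q) f F ∧ f * f = f ∧ F * F = F ∧ JBelow q (clM f)) ∨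
      TreeRootH α β clM clN S (D q) s T := by
  have toTree : ∀ (n : ℕ) (q : Q) (s : M) (T : Set N),
      ((∃ (x f y : M) (X F Y : Set N), s = x * f * y ∧
        T ⊆ X * (F * {t | t ∈ S ∧ clM f = clN t} * F) * Y ∧
        TreeRootH α β clM clN S (n + 1) x X ∧ TreeRootH α β clM clN S (n + 1) y Y ∧
        TreeRootH α β clM clN S n f F ∧ f * f = f ∧ F * F = F ∧ JBelow q (clM f)) ∨
      TreeRootH α β clM clN S n s T) → TreeRootH α β clM clN S (n + 1) s T := by
    rintro n q s T (⟨x, f, y, X, F, Y, rfl, hT, hX, hY, hF, hf, hFF, -⟩ | h)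
    · exact .binary T (.binary _ hX (.op _ hF hf hFF subset_rfl) subset_rfl) hY hT
    · exact h.succ
  have one : ∀ n, TreeRootH α β clM clN S n 1 {1} := fun n => by
    have := TreeRootH.leaf (α := α) (β := β) (clM := clM) (clN := clN) (S := S) n 1
    simpa using this
  induction h with
  | leaf h w => exact fun q _ => Or.inr (.leaf _ w)
  | @binary h s₁ T₁ s₂ T₂ T _ _ hT ih1 ih2 =>
    intro q hq
    have i1 := ih1 q (JBelow.trans' ⟨1, clM s₂, by simp⟩ hq)
    have i2 := ih2 q (JBelow.trans' ⟨clM s₁, 1, by simp⟩ hq)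
    have t1 := toTree _ _ _ _ i1
    have t2 := toTree _ _ _ _ i2
    rcases i1 with ⟨x, f, y, X, F, Y, rfl, hT', hX, hY, hF, hf, hFF, hJ⟩ | i1
    · left
      refine ⟨x, f, y * s₂, X, F, Y * T₂, by simp only [mul_assoc], ?_, hX,
        .binary _ hY t2 subset_rfl, hF, hf, hFF, hJ⟩
      rw [← mul_assoc]
      exact hT.trans (Set.mul_subset_mul_right hT')
    · rcases i2 with ⟨x, f, y, X, F, Y, rfl, hT', hX, hY, hF, hf, hFF, hJ⟩ | i2
      · left
        refine ⟨s₁ * x, f, y, T₁ * X, F, Y, by simp only [mul_assoc], ?_,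
          .binary _ t1 hX subset_rfl, hY, hF, hf, hFF, hJ⟩
        rw [mul_assoc T₁, mul_assoc T₁]
        exact hT.trans (Set.mul_subset_mul_left hT')
      · exact Or.inr (.binary T i1 i2 hT)
  | @op h e E T hE0 he hE hT ih =>
    intro q hq
    have main : (∃ (x f y : M) (X F Y : Set N), e = x * f * y ∧
        T ⊆ X * (F * {t | t ∈ S ∧ clM f = clN t} * F) * Y ∧
        TreeRootH α β clM clN S (D (clM e) + 1) x X ∧
        TreeRootH α β clM clN S (D (clM e) + 1) y Y ∧
        TreeRootH α β clM clN S (D (clM e)) f F ∧ f * f = f ∧ F * F = F ∧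
        JBelow (clM e) (clM f)) := by
      rcases ih (clM e) (JBelow.rfl' _) with
        ⟨x, f, y, X, F, Y, hxy, hT', hX, hY, hF, hf, hFF, hJ⟩ | i
      · refine ⟨x, f, y, X, F, Y, hxy, ?_, hX, hY, hF, hf, hFF, hJ⟩
        have key := key_idem (e := clM e) (f := clM f) (x := clM x) (y := clM y)
          (by rw [← map_mul, he]) (by rw [← map_mul, hf])
          (by rw [← map_mul, ← map_mul, ← hxy]) hJ
        have sX := hX.sound hcl hS
        have sY := hY.sound hcl hS
        have sF := hF.sound hcl hS
        intro t ht
        obtain ⟨_, ⟨_, h1, r, hr, rfl⟩, _, h2, rfl⟩ := hT ht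
        obtain ⟨_, ⟨x1, hx1, _, ⟨_, ⟨f1, hf1, s1, hs1, rfl⟩, f2, hf2, rfl⟩, rfl⟩, y1, hy1, rfl⟩ :=
          hT' h1
        obtain ⟨_, ⟨x2, hx2, _, ⟨_, ⟨f3, hf3, s2, hs2, rfl⟩, f4, hf4, rfl⟩, rfl⟩, y2, hy2, rfl⟩ :=
          hT' h2
        have m := hS.2
        have hmid : s1 * f2 * y1 * r * x2 * f3 * s2 ∈ {t | t ∈ S ∧ clM f = clN t} := by
          refine ⟨m _ (m _ (m _ (m _ (m _ (m _ hs1.1 _ (sF _ hf2).1) _ (sY _ hy1).1) _ hr.1) _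
            (sX _ hx2).1) _ (sF _ hf3).1) _ hs2.1, ?_⟩
          have hff : clM f * clM f = clM f := by rw [← map_mul, hf]
          simp only [map_mul, ← hs1.2, ← hs2.2, ← hr.2, (sF _ hf2).2, (sF _ hf3).2,
            (sY _ hy1).2, (sX _ hx2).2]
          rw [hff, key, hff]
        have := Set.mul_mem_mul (Set.mul_mem_mul hx1
          (Set.mul_mem_mul (Set.mul_mem_mul hf1 hmid) hf4)) hy2
        simpa only [mul_assoc] using this
      · refine ⟨1, e, 1, {1}, E, {1}, by simp, ?_, one _, one _, i, he, hE, JBelow.rfl' _⟩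
        rw [Set.singleton_one, one_mul, mul_one]
        exact hT
    by_cases hc : JBelow q (clM e)
    · left
      rw [← D2 _ _ hq hc]
      obtain ⟨x, f, y, X, F, Y, hxy, hT', hX, hY, hF, hf, hFF, hJ⟩ := main
      exact ⟨x, f, y, X, F, Y, hxy, hT', hX, hY, hF, hf, hFF, hc.trans' hJ⟩
    · right
      exact (toTree _ _ _ _ (Or.inl main)).mono (D1 _ _ ⟨hq, hc⟩)

end Trees

theorem statement9
    (C : LangClass) (hqba : IsQBA C) (hfin : IsFiniteClass C)
    {A : Type} [Fintype A]
    (hcong : ∀ u v u' v' : FreeMonoid A,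
      cRel (C A) u u' → cRel (C A) v v' → cRel (C A) (u * v) (u' * v'))
    {M N : Type} [Monoid M] [Fintype M] [Monoid N] [Fintype N]
    (α : FreeMonoid A →* M) (β : FreeMonoid A →* N)
    (clM : M →* (cCon (C A) hcong).Quotient)
    (hclM : ∀ w : FreeMonoid A, clM (α w) = (cCon (C A) hcong).mk' w)
    (clN : N →* (cCon (C A) hcong).Quotient)
    (hclN : ∀ w : FreeMonoid A, clN (β w) = (cCon (C A) hcong).mk' w)
    (S : Set N) (hS : GoodSubset β S)
    (h : ℕ) (hJ : JDepthIs (cCon (C A) hcong).Quotient h)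
    (s : M) (T : Set N) :
    (∃ k : ℕ, TreeRootH α β clM clN S k s T) ↔ TreeRootH α β clM clN S h s T := by
  constructor
  · rintro ⟨k, hk⟩
    have hfinQ : Finite (cCon (C A) hcong).Quotient := by
      apply Finite.of_surjective clM
      intro q
      obtain ⟨w, rfl⟩ := (cCon (C A) hcong).mk'_surjective q
      exact ⟨α w, hclM w⟩
    have hcl : ∀ w, clM (α w) = clN (β w) := fun w => (hclM w).trans (hclN w).symm
    obtain ⟨D, D0, D1, D2⟩ := exists_depth hJ
    rcases tree_main hcl hS D D1 D2 hk (clM s) (JBelow.rfl' _) with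
      ⟨x, f, y, X, F, Y, rfl, hT, hX, hY, hF, hf, hFF, -⟩ | i
    · exact TreeRootH.mono (D0 _)
        (.binary T (.binary _ hX (.op _ hF hf hFF subset_rfl) subset_rfl) hY hT)
    · exact i.succ.mono (D0 _)
  · exact fun hk => ⟨h, hk⟩
end

section
/- Let C be a finite quotienting Boolean algebra, A an alphabet, α: A* → M and β: A* → N C-compatible morphisms, and S ⊆ N a good subset. Suppose an (α,β,S)-tree 𝕋 contains a branch with two distinct S-operation nodes x and x' whose labels (s,T) and (s',T') satisfy [s]_C = [s']_C. Then there exists an (α,β,S)-tree 𝕋' with strictly smaller operational size than 𝕋 and with the same root label as 𝕋. -/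
open scoped Pointwise

/-- `(α,β,S)`-trees as trees: a node is a leaf (carrying a word), a binary node or an
`S`-operation node (each carrying its label in `M × 2^N`). -/
inductive STree (A M N : Type) where
  | leaf (w : List A)
  | binary (lab : M × Set N) (l r : STree A M N)
  | op (lab : M × Set N) (c : STree A M N)

namespace STree

variable {A M N Q : Type} [Monoid M] [Monoid N] [Monoid Q]

/-- The label of (the root of) a tree. -/
def label (α : FreeMonoid A →* M) (β : FreeMonoid A →* N) : STree A M N → M × Set N
  | .leaf w => (α (FreeMonoid.ofList w), {β (FreeMonoid.ofList w)})
  | .binary lab _ _ => lab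
  | .op lab _ => lab

/-- Validity of an `(α,β,S)`-tree: the label of a leaf carrying `w` is
`(α(w), {β(w)})`; a binary node with children labeled `(s₁,T₁)` and `(s₂,T₂)` is
labeled `(s₁s₂, T)` with `T ⊆ T₁T₂`; an `S`-operation node has a child whose label is
an idempotent `(e,E)` and is labeled `(e,T)` with
`T ⊆ E · {t ∈ S | [e]_C = [t]_C} · E`. -/
def Valid (α : FreeMonoid A →* M) (β : FreeMonoid A →* N)
    (clM : M →* Q) (clN : N →* Q) (S : Set N) : STree A M N → Prop
  | .leaf _ => True
  | .binary lab l r =>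
      Valid α β clM clN S l ∧ Valid α β clM clN S r ∧
      lab.1 = (l.label α β).1 * (r.label α β).1 ∧
      lab.2 ⊆ (l.label α β).2 * (r.label α β).2
  | .op lab c =>
      Valid α β clM clN S c ∧
      lab.1 = (c.label α β).1 ∧
      (c.label α β).1 * (c.label α β).1 = (c.label α β).1 ∧
      (c.label α β).2 * (c.label α β).2 = (c.label α β).2 ∧
      lab.2 ⊆ (c.label α β).2 * {t | t ∈ S ∧ clM (c.label α β).1 = clN t} *
        (c.label α β).2

/-- The operational size of a tree: its total number of `S`-operation nodes. -/
def opSize : STree A M N → ℕ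
  | .leaf _ => 0
  | .binary _ l r => l.opSize + r.opSize
  | .op _ c => c.opSize + 1

/-- Being an `S`-operation node. -/
def IsOp : STree A M N → Prop
  | .op _ _ => True
  | _ => False

/-- The child relation between a tree and its immediate subtrees. -/
inductive IsChild : STree A M N → STree A M N → Prop
  | binL (lab : M × Set N) (l r : STree A M N) : IsChild (.binary lab l r) l
  | binR (lab : M × Set N) (l r : STree A M N) : IsChild (.binary lab l r) r
  | op (lab : M × Set N) (c : STree A M N) : IsChild (.op lab c) c

end STree

namespace Aux10

theorem eq_of_idem {Q : Type} [Monoid Q] [Finite Q] (g p a b : Q)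
    (hgg : g * g = g) (hp : p * p = p) (hgp : g * p = p) (hpg : p * g = p)
    (h : g = a * p * b) : p = g := by
  have h1 : g = a * g * (p * b) := by
    calc g = a * p * b := h
      _ = a * (g * p) * b := by rw [hgp]
      _ = a * g * (p * b) := by simp only [mul_assoc]
  have hn : ∀ n : ℕ, g = a ^ n * g * (p * b) ^ n := by
    intro n
    induction n with
    | zero => simp
    | succ n ih =>
      calc g = a ^ n * g * (p * b) ^ n := ih
        _ = a ^ n * (a * g * (p * b)) * (p * b) ^ n := by rw [← h1]
        _ = a ^ (n+1) * g * (p * b) ^ (n+1) := by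
          rw [pow_succ a, pow_succ' (p * b)]; simp only [mul_assoc]
  obtain ⟨i, j, hij, he⟩ : ∃ i j : ℕ, i < j ∧ (p * b) ^ i = (p * b) ^ j := by
    obtain ⟨i, j, hne, he⟩ := Finite.exists_ne_map_eq_of_infinite (fun n : ℕ => (p * b) ^ n)
    rcases lt_or_gt_of_ne hne with h | h
    · exact ⟨i, j, h, he⟩
    · exact ⟨j, i, h, he.symm⟩
  obtain ⟨k, rfl⟩ := Nat.exists_eq_add_of_lt hij
  have h2 : g = g * (p * b) ^ (k + 1) := by
    calc g = a ^ i * g * (p * b) ^ i := hn i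
      _ = a ^ i * g * (p * b) ^ (i + k + 1) := by rw [← he]
      _ = (a ^ i * g * (p * b) ^ i) * (p * b) ^ (k + 1) := by
        rw [add_assoc, pow_add]; simp only [mul_assoc]
      _ = g * (p * b) ^ (k + 1) := by rw [← hn i]
  have h3 : g = p * (b * (p * b) ^ k) := by
    calc g = g * (p * b) ^ (k + 1) := h2
      _ = (g * p) * (b * (p * b) ^ k) := by rw [pow_succ']; simp only [mul_assoc]
      _ = _ := by rw [hgp]
  calc p = p * g := hpg.symm
    _ = p * (p * (b * (p * b) ^ k)) := by rw [← h3]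
    _ = (p * p) * (b * (p * b) ^ k) := by simp only [mul_assoc]
    _ = g := by rw [hp, ← h3]

theorem mid_class {Q : Type} [Monoid Q] [Finite Q] (e f u v a b : Q)
    (hee : e * e = e) (hff : f * f = f) (he : e = u * f * v) (hf : f = a * e * b) :
    f * v * e * u * f = f := by
  have he' : ∀ z, u * (f * (v * z)) = e * z := by intro z; rw [he]; simp only [mul_assoc]
  have hee' : ∀ z, e * (e * z) = e * z := by intro z; rw [← mul_assoc, hee]
  have hff' : ∀ z, f * (f * z) = f * z := by intro z; rw [← mul_assoc, hff]
  refine eq_of_idem f _ (a * u) (v * b) hff ?_ ?_ ?_ ?_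
  · simp only [mul_assoc, hff', he', hee']
  · simp only [mul_assoc, hff']
  · simp only [mul_assoc, hff]
  · simp only [mul_assoc, he', hee']
    rw [← mul_assoc, ← hf]

variable {A M N Q : Type} [Monoid M] [Monoid N] [Monoid Q]
  {α : FreeMonoid A →* M} {β : FreeMonoid A →* N}
  {clM : M →* Q} {clN : N →* Q} {S : Set N}

theorem label_mem (hS : GoodSubset β S) (hab : ∀ w, clM (α w) = clN (β w))
    (t : STree A M N) (ht : t.Valid α β clM clN S) :
    ∀ n ∈ (t.label α β).2, n ∈ S ∧ clN n = clM (t.label α β).1 := by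
  induction t with
  | leaf w =>
    intro n hn
    simp only [STree.label, Set.mem_singleton_iff] at hn
    subst hn
    exact ⟨hS.1 _, (hab _).symm⟩
  | binary lab l r ihl ihr =>
    obtain ⟨hl, hr, h1, h2⟩ := ht
    intro n hn
    obtain ⟨x, hx, y, hy, rfl⟩ := h2 hn
    obtain ⟨a1, a2⟩ := ihl hl x hx
    obtain ⟨b1, b2⟩ := ihr hr y hy
    refine ⟨hS.2 _ a1 _ b1, ?_⟩
    change clN (x * y) = clM lab.1
    rw [h1, map_mul, map_mul, a2, b2]
  | op lab c ih =>
    obtain ⟨hc, h1, h2, h3, h4⟩ := ht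
    intro n hn
    obtain ⟨_, ⟨x, hx, y, hy, rfl⟩, z, hz, rfl⟩ := h4 hn
    obtain ⟨a1, a2⟩ := ih hc x hx
    obtain ⟨b1, b2⟩ := ih hc z hz
    refine ⟨hS.2 _ (hS.2 _ a1 _ hy.1) _ b1, ?_⟩
    change clN (x * y * z) = clM lab.1
    rw [h1, map_mul, map_mul, a2, b2, ← hy.2, ← map_mul, h2, ← map_mul, h2]

theorem child_valid {t x : STree A M N} (h : STree.IsChild t x)
    (ht : t.Valid α β clM clN S) :
    x.Valid α β clM clN S ∧
      ∃ a b, clM (t.label α β).1 = a * clM (x.label α β).1 * b := by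
  cases h with
  | binL lab l r =>
    obtain ⟨hl, hr, h1, h2⟩ := ht
    exact ⟨hl, 1, clM (r.label α β).1, by simp [STree.label, h1]⟩
  | binR lab l r =>
    obtain ⟨hl, hr, h1, h2⟩ := ht
    exact ⟨hr, clM (l.label α β).1, 1, by simp [STree.label, h1]⟩
  | op lab c =>
    obtain ⟨hc, h1, -⟩ := ht
    exact ⟨hc, 1, 1, by simp [STree.label, h1]⟩

theorem desc_J {t x : STree A M N} (h : Relation.ReflTransGen STree.IsChild t x)
    (ht : t.Valid α β clM clN S) :
    x.Valid α β clM clN S ∧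
      ∃ a b, clM (t.label α β).1 = a * clM (x.label α β).1 * b := by
  induction h with
  | refl => exact ⟨ht, 1, 1, by simp⟩
  | tail _ hc ih =>
    obtain ⟨hv, a, b, hab⟩ := ih
    obtain ⟨hv', a', b', hab'⟩ := child_valid hc hv
    exact ⟨hv', a * a', b' * b, by rw [hab, hab']; simp only [mul_assoc]⟩

/-- Set of the labels of an operation. -/
def mid (clM : M →* Q) (clN : N →* Q) (S : Set N) (f : M) (F : Set N) : Set N :=
  F * {t | t ∈ S ∧ clM f = clN t} * F

theorem descend (hS : GoodSubset β S) (hab : ∀ w, clM (α w) = clN (β w))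
    (c x' : STree A M N) (hx' : x'.IsOp) (hc : c.Valid α β clM clN S)
    (hpath : Relation.ReflTransGen STree.IsChild c x') :
    ∃ (u v f : M) (U V F : Set N),
      f * f = f ∧ (c.label α β).1 = u * f * v ∧
      (c.label α β).2 ⊆ U * mid clM clN S f F * V ∧
      (∀ n ∈ U, n ∈ S ∧ clN n = clM u) ∧
      (∀ n ∈ V, n ∈ S ∧ clN n = clM v) ∧
      (∀ n ∈ F, n ∈ S ∧ clN n = clM f) ∧
      (∃ a b, clM f = a * clM (x'.label α β).1 * b) ∧
      (∀ T, T ⊆ U * mid clM clN S f F * V → ∃ c' : STree A M N,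
        c'.Valid α β clM clN S ∧ c'.label α β = ((c.label α β).1, T) ∧
        c'.opSize = c.opSize) := by
  have h1S : (1 : N) ∈ S := by simpa using hS.1 1
  induction c with
  | leaf w =>
    rcases Relation.ReflTransGen.cases_head hpath with rfl | ⟨d, hd, _⟩
    · exact hx'.elim
    · cases hd
  | op lab c ih =>
    obtain ⟨_, hJ⟩ := desc_J hpath hc
    obtain ⟨hc0, h1, h2, h3, h4⟩ := hc
    refine ⟨1, 1, (c.label α β).1, {1}, {1}, (c.label α β).2, h2, by simp [STree.label, h1],
      ?_, by simp [h1S], by simp [h1S], label_mem hS hab c hc0, ?_, ?_⟩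
    · rw [Set.singleton_one, one_mul, mul_one]; exact h4
    · rw [← h1]; exact hJ
    · intro T hT
      rw [Set.singleton_one, one_mul, mul_one] at hT
      exact ⟨.op (lab.1, T) c, ⟨hc0, h1, h2, h3, hT⟩, rfl, rfl⟩
  | binary lab l r ihl ihr =>
    obtain ⟨hl, hr, h1, h2⟩ := hc
    rcases Relation.ReflTransGen.cases_head hpath with rfl | ⟨d, hd, hp⟩
    · exact hx'.elim
    cases hd with
    | binL =>
      obtain ⟨u, v, f, U, V, F, hf, hlab, hsub, hU, hV, hF, hJ, hT⟩ := ihl hl hp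
      refine ⟨u, v * (r.label α β).1, f, U, V * (r.label α β).2, F, hf, ?_, ?_, hU, ?_, hF, hJ, ?_⟩
      · change lab.1 = _
        rw [h1, hlab]; simp only [mul_assoc]
      · refine h2.trans ?_
        rw [← mul_assoc]
        exact Set.mul_subset_mul_right hsub
      · rintro _ ⟨x, hx, y, hy, rfl⟩
        obtain ⟨b1, b2⟩ := label_mem hS hab r hr y hy
        exact ⟨hS.2 _ (hV x hx).1 _ b1, by simp only [map_mul, (hV x hx).2, b2]⟩
      · intro T hTT
        obtain ⟨c', hv, hlb, hsz⟩ := hT _ subset_rfl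
        refine ⟨.binary (lab.1, T) c' r, ⟨hv, hr, ?_, ?_⟩, rfl, ?_⟩
        · simp only [hlb, h1]
        · rw [hlb]; rw [← mul_assoc] at hTT; exact hTT
        · simp only [STree.opSize, hsz]
    | binR =>
      obtain ⟨u, v, f, U, V, F, hf, hlab, hsub, hU, hV, hF, hJ, hT⟩ := ihr hr hp
      refine ⟨(l.label α β).1 * u, v, f, (l.label α β).2 * U, V, F, hf, ?_, ?_, ?_, hV, hF, hJ, ?_⟩
      · change lab.1 = _
        rw [h1, hlab]; simp only [mul_assoc]
      · refine h2.trans ?_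
        rw [mul_assoc, mul_assoc, ← mul_assoc U]
        exact Set.mul_subset_mul_left hsub
      · rintro _ ⟨y, hy, x, hx, rfl⟩
        obtain ⟨b1, b2⟩ := label_mem hS hab l hl y hy
        exact ⟨hS.2 _ b1 _ (hU x hx).1, by simp only [map_mul, (hU x hx).2, b2]⟩
      · intro T hTT
        obtain ⟨c', hv, hlb, hsz⟩ := hT _ subset_rfl
        refine ⟨.binary (lab.1, T) l c', ⟨hl, hv, ?_, ?_⟩, rfl, ?_⟩
        · simp only [hlb, h1]
        · rw [hlb]; rw [mul_assoc, mul_assoc, ← mul_assoc U] at hTT; exact hTT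
        · simp only [STree.opSize, hsz]

theorem reduce_op [Finite Q] (hS : GoodSubset β S) (hab : ∀ w, clM (α w) = clN (β w))
    (x x' : STree A M N) (hv : x.Valid α β clM clN S)
    (hxx' : Relation.TransGen STree.IsChild x x')
    (hxop : x.IsOp) (hx'op : x'.IsOp)
    (hcl : clM (x.label α β).1 = clM (x'.label α β).1) :
    ∃ y : STree A M N, y.Valid α β clM clN S ∧
      y.opSize < x.opSize ∧ y.label α β = x.label α β := by
  obtain ⟨d, hd, hp⟩ := Relation.TransGen.head'_iff.1 hxx'
  cases hd with
  | binL => exact hxop.elim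
  | binR => exact hxop.elim
  | op lab =>
    rename' d => c
    obtain ⟨hc, h1, h2, h3, h4⟩ := hv
    obtain ⟨u, v, f, U, V, F, hf, hlab, hsub, hU, hV, hF, ⟨a, b, hJ⟩, hT⟩ :=
      descend hS hab c x' hx'op hc hp
    rw [← hcl] at hJ
    change clM f = a * clM lab.1 * b at hJ
    rw [h1] at hJ
    have hclass := mid_class (clM (c.label α β).1) (clM f) (clM u) (clM v) a b
      (by rw [← map_mul, h2]) (by rw [← map_mul, hf]) (by rw [hlab]; simp only [map_mul]) hJ
    have hff' : ∀ z, clM f * (clM f * z) = clM f * z := by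
      intro z; rw [← mul_assoc, ← map_mul, hf]
    obtain ⟨c', hv', hl', hs'⟩ := hT lab.2 (by
      intro n hn
      obtain ⟨_, ⟨n1, hn1, s, hs, rfl⟩, n2, hn2, rfl⟩ := h4 hn
      obtain ⟨_, ⟨u1, hu1, _, ⟨_, ⟨p1, hp1, s1, hs1, rfl⟩, q1, hq1, rfl⟩, rfl⟩, v1, hv1, rfl⟩ :=
        hsub hn1
      obtain ⟨_, ⟨u2, hu2, _, ⟨_, ⟨p2, hp2, s2, hs2, rfl⟩, q2, hq2, rfl⟩, rfl⟩, v2, hv2, rfl⟩ :=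
        hsub hn2
      have key : s1 * q1 * v1 * s * u2 * p2 * s2 ∈ {t | t ∈ S ∧ clM f = clN t} := by
        refine ⟨?_, ?_⟩
        · exact hS.2 _ (hS.2 _ (hS.2 _ (hS.2 _ (hS.2 _ (hS.2 _ hs1.1 _ (hF _ hq1).1) _
            (hV _ hv1).1) _ hs.1) _ (hU _ hu2).1) _ (hF _ hp2).1) _ hs2.1
        · simp only [map_mul, ← hs1.2, ← hs2.2, ← hs.2, (hF _ hq1).2, (hF _ hp2).2,
            (hV _ hv1).2, (hU _ hu2).2]
          have h5 : clM f * clM f = clM f := by rw [← map_mul, hf]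
          rw [h5, mul_assoc _ (clM f) (clM f), h5]
          exact hclass.symm
      have := Set.mul_mem_mul (Set.mul_mem_mul hu1
        (Set.mul_mem_mul (Set.mul_mem_mul hp1 key) hq2)) hv2
      simp only [mid]
      convert this using 1
      simp only [mul_assoc])
    refine ⟨c', hv', ?_, ?_⟩
    · simp only [STree.opSize, hs']; omega
    · rw [hl', ← h1]; rfl

theorem replace {t x y : STree A M N} (h : Relation.ReflTransGen STree.IsChild t x)
    (ht : t.Valid α β clM clN S) (hy : y.Valid α β clM clN S)
    (hlt : y.opSize < x.opSize) (hlab : y.label α β = x.label α β) :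
    ∃ t' : STree A M N, t'.Valid α β clM clN S ∧
      t'.opSize < t.opSize ∧ t'.label α β = t.label α β := by
  induction h using Relation.ReflTransGen.head_induction_on with
  | refl => exact ⟨y, hy, hlt, hlab⟩
  | head hc _ ih =>
    obtain ⟨t', hv', hlt', hlab'⟩ := ih (child_valid hc ht).1
    cases hc with
    | binL lab l r =>
      obtain ⟨hl, hr, h1, h2⟩ := ht
      refine ⟨.binary lab t' r, ⟨hv', hr, by rw [hlab', h1], by rw [hlab']; exact h2⟩, ?_, rfl⟩
      simp only [STree.opSize]; omega
    | binR lab l r =>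
      obtain ⟨hl, hr, h1, h2⟩ := ht
      refine ⟨.binary lab l t', ⟨hl, hv', by rw [hlab', h1], by rw [hlab']; exact h2⟩, ?_, rfl⟩
      simp only [STree.opSize]; omega
    | op lab c =>
      obtain ⟨hc, h⟩ := ht
      refine ⟨.op lab t', ⟨hv', by rw [hlab']; exact h⟩, ?_, rfl⟩
      simp only [STree.opSize]; omega

end Aux10

theorem statement10
    (C : LangClass) (hqba : IsQBA C) (hfin : IsFiniteClass C)
    {A : Type} [Fintype A]
    (hcong : ∀ u v u' v' : FreeMonoid A,
      cRel (C A) u u' → cRel (C A) v v' → cRel (C A) (u * v) (u' * v'))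
    {M N : Type} [Monoid M] [Fintype M] [Monoid N] [Fintype N]
    (α : FreeMonoid A →* M) (β : FreeMonoid A →* N)
    (clM : M →* (cCon (C A) hcong).Quotient)
    (hclM : ∀ w : FreeMonoid A, clM (α w) = (cCon (C A) hcong).mk' w)
    (clN : N →* (cCon (C A) hcong).Quotient)
    (hclN : ∀ w : FreeMonoid A, clN (β w) = (cCon (C A) hcong).mk' w)
    (S : Set N) (hS : GoodSubset β S)
    (𝕋 : STree A M N) (hvalid : 𝕋.Valid α β clM clN S)
    -- a branch of `𝕋` contains two distinct `S`-operation nodes `x` and `x'`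
    (x x' : STree A M N)
    (hx : Relation.ReflTransGen STree.IsChild 𝕋 x)
    (hxx' : Relation.TransGen STree.IsChild x x')
    (hxop : x.IsOp) (hx'op : x'.IsOp)
    -- whose labels `(s,T)` and `(s',T')` satisfy `[s]_C = [s']_C`
    (hcl : clM (x.label α β).1 = clM (x'.label α β).1) :
    ∃ 𝕋' : STree A M N, 𝕋'.Valid α β clM clN S ∧
      𝕋'.opSize < 𝕋.opSize ∧ 𝕋'.label α β = 𝕋.label α β := by
  have hfinQ : Finite (cCon (C A) hcong).Quotient := by
    refine Finite.of_surjective clM ?_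
    intro q
    obtain ⟨w, rfl⟩ := Con.mk'_surjective q
    exact ⟨α w, hclM w⟩
  have hab : ∀ w, clM (α w) = clN (β w) := fun w => (hclM w).trans (hclN w).symm
  have hxv := (Aux10.desc_J hx hvalid).1
  obtain ⟨y, hy, hlt, hlab⟩ := Aux10.reduce_op hS hab x x' hxv hxx' hxop hx'op hcl
  exact Aux10.replace hx hvalid hy hlt hlab
end

section
/- Let C be a finite quotienting Boolean algebra, A an alphabet, α: A* → M and β: A* → N C-compatible morphisms, and S ⊆ N a good subset. Then every pair (s,T) ∈ M × 2^N which is the label of some node of an (α,β,S)-tree satisfies T ⊆ {t ∈ S | [t]_C = [s]_C}. -/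
open scoped Pointwise

theorem statement11
    (C : LangClass) (hqba : IsQBA C) (hfin : IsFiniteClass C)
    {A : Type} [Fintype A]
    (hcong : ∀ u v u' v' : FreeMonoid A,
      cRel (C A) u u' → cRel (C A) v v' → cRel (C A) (u * v) (u' * v'))
    {M N : Type} [Monoid M] [Fintype M] [Monoid N] [Fintype N]
    (α : FreeMonoid A →* M) (β : FreeMonoid A →* N)
    (clM : M →* (cCon (C A) hcong).Quotient)
    (hclM : ∀ w : FreeMonoid A, clM (α w) = (cCon (C A) hcong).mk' w)
    (clN : N →* (cCon (C A) hcong).Quotient)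
    (hclN : ∀ w : FreeMonoid A, clN (β w) = (cCon (C A) hcong).mk' w)
    (S : Set N) (hS : GoodSubset β S)
    (s : M) (T : Set N) (htree : TreeRoot α β clM clN S s T) :
    T ⊆ {t | t ∈ S ∧ clN t = clM s} := by
  induction htree with
  | leaf w =>
    intro t ht
    rw [Set.mem_singleton_iff] at ht
    subst ht
    exact ⟨hS.1 w, by rw [hclM, hclN]⟩
  | binary T _ _ hT ih₁ ih₂ =>
    intro t ht
    obtain ⟨a, ha, b, hb, rfl⟩ := Set.mem_mul.1 (hT ht)
    exact ⟨hS.2 _ (ih₁ ha).1 _ (ih₂ hb).1, by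
      rw [map_mul, map_mul, (ih₁ ha).2, (ih₂ hb).2]⟩
  | op T _ he _ hT ih =>
    intro t ht
    obtain ⟨x, hx, b, hb, rfl⟩ := Set.mem_mul.1 (hT ht)
    obtain ⟨a, ha, c, hc, rfl⟩ := Set.mem_mul.1 hx
    exact ⟨hS.2 _ (hS.2 _ (ih ha).1 _ hc.1) _ (ih hb).1, by
      rw [map_mul, map_mul, (ih ha).2, (ih hb).2, ← hc.2, ← map_mul, ← map_mul, he, he]⟩
end
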